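/- Let d ≥ 1 and α ∈ (0,1). Let A = {y ∈ ℝ^d : |y| < 1/4 and y_d > 0} and let e_d = (0,…,0,1) ∈ ℝ^d. Then liminf_{h→0⁺} (1/h) ∫_A (|y|^{α−d} − |y + h e_d|^{α−d}) y_d^{1−α} dy = +∞. (In particular, the difference quotients of the function x ↦ ∫_A |x−y|^{α−d} y_d^{1−α} dy at 0 in the direction −e_d diverge, so this Riesz-type potential of ((y_d)_+)^{2−α} is not twice differentiable at 0.) -/

import Mathlib

open MeasureTheory Set Filter Topology

/-- the half ball -/
def halfBall (d : ℕ) (i : Fin d) (r : ℝ) : Set (EuclideanSpace ℝ (Fin d)) :=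
  {y | ‖y‖ < r ∧ 0 < y i}

/-- the pointwise limit of the difference quotients -/
noncomputable def gfun (d : ℕ) (i : Fin d) (α : ℝ) (y : EuclideanSpace ℝ (Fin d)) : ℝ :=
  ((d : ℝ) - α) * ‖y‖ ^ (α - (d:ℝ) - 2) * (y i) ^ (2 - α)

/-- the integrand -/
noncomputable def ffun (d : ℕ) (i : Fin d) (α h : ℝ) (y : EuclideanSpace ℝ (Fin d)) : ℝ :=
  (‖y‖ ^ (α - (d:ℝ)) - ‖y + h • EuclideanSpace.single i (1:ℝ)‖ ^ (α - (d:ℝ))) * (y i) ^ (1 - α)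

lemma halfBall_open (d : ℕ) (i : Fin d) (r : ℝ) : IsOpen (halfBall d i r) := by
  unfold halfBall
  refine IsOpen.and ?_ ?_
  · exact isOpen_lt (by fun_prop) (by fun_prop)
  · exact isOpen_lt (by fun_prop) (by fun_prop)

lemma gfun_meas (d : ℕ) (i : Fin d) (α : ℝ) : Measurable (gfun d i α) := by
  unfold gfun; fun_prop

lemma ffun_meas (d : ℕ) (i : Fin d) (α h : ℝ) : Measurable (ffun d i α h) := by
  unfold ffun; fun_prop

lemma norm_pos_of (d : ℕ) (i : Fin d) (y : EuclideanSpace ℝ (Fin d)) (hy : 0 < y i) : 0 < ‖y‖ := by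
  rw [norm_pos_iff]; rintro rfl; simp at hy

lemma norm_sq_shift (d : ℕ) (i : Fin d) (y : EuclideanSpace ℝ (Fin d)) (h : ℝ) :
    ‖y + h • EuclideanSpace.single i (1:ℝ)‖ ^ 2 = ‖y‖ ^ 2 + 2 * h * y i + h ^ 2 := by
  rw [norm_add_sq_real, inner_smul_right, norm_smul]
  simp [EuclideanSpace.inner_single_right]
  ring

lemma gfun_pos (d : ℕ) (i : Fin d) (α : ℝ) (hd : 1 ≤ d) (hα : α < 1)
    (y : EuclideanSpace ℝ (Fin d)) (hy : 0 < y i) : 0 < gfun d i α y := by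
  have h1 := norm_pos_of d i y hy
  have h2 : (1:ℝ) ≤ d := by exact_mod_cast hd
  have h3 : 0 < (d:ℝ) - α := by linarith
  unfold gfun
  positivity

lemma gfun_scale (d : ℕ) (i : Fin d) (α : ℝ)
    (y : EuclideanSpace ℝ (Fin d)) (hy : 0 < y i) :
    gfun d i α ((2:ℝ) • y) = ((2:ℝ) ^ d)⁻¹ * gfun d i α y := by
  have h1 := norm_pos_of d i y hy
  have e : (2:ℝ) ^ (α - (d:ℝ) - 2) * (2:ℝ) ^ (2 - α) = ((2:ℝ)^d)⁻¹ := by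
    rw [← Real.rpow_add (by norm_num), ← Real.rpow_natCast, ← Real.rpow_neg (by norm_num)]
    congr 1; ring
  unfold gfun
  rw [norm_smul]
  simp only [PiLp.smul_apply, smul_eq_mul, Real.norm_ofNat]
  rw [Real.mul_rpow (by norm_num) h1.le, Real.mul_rpow (by norm_num) hy.le, ← e]
  ring

lemma lintegral_g_top (d : ℕ) (i : Fin d) (α : ℝ) (hd : 1 ≤ d) (hα : α < 1) :
    ∫⁻ y in halfBall d i (1/4), ENNReal.ofReal (gfun d i α y) = ⊤ := by
  by_contra hne
  have hm : Measurable fun y => ENNReal.ofReal (gfun d i α y) := (gfun_meas d i α).ennreal_ofReal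
  have hA := (halfBall_open d i (1/4)).measurableSet
  have hA' := (halfBall_open d i (1/8)).measurableSet
  have hpre : (fun x : EuclideanSpace ℝ (Fin d) => (2:ℝ) • x) ⁻¹' (halfBall d i (1/4))
      = halfBall d i (1/8) := by
    ext x
    simp only [halfBall, mem_preimage, mem_ofPred_eq, norm_smul, PiLp.smul_apply, smul_eq_mul,
      Real.norm_ofNat]
    constructor <;> rintro ⟨a, b⟩ <;> constructor <;> linarith
  have key := setLIntegral_map (μ := (volume : Measure (EuclideanSpace ℝ (Fin d)))) hA hm
    (measurable_const_smul (2:ℝ))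
  rw [Measure.map_addHaar_smul _ (by norm_num : (2:ℝ) ≠ 0)] at key
  rw [Measure.restrict_smul, lintegral_smul_measure] at key
  change _ = ∫⁻ x in (fun x : EuclideanSpace ℝ (Fin d) => (2:ℝ) • x) ⁻¹' (halfBall d i (1/4)), _ at key
  rw [hpre] at key
  have e2 : ∫⁻ x in halfBall d i (1/8), ENNReal.ofReal (gfun d i α ((2:ℝ) • x))
      = ENNReal.ofReal ((2:ℝ)^d)⁻¹ * ∫⁻ x in halfBall d i (1/8), ENNReal.ofReal (gfun d i α x) := by
    rw [← lintegral_const_mul _ hm]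
    refine setLIntegral_congr_fun hA' fun x hx => ?_
    rw [gfun_scale d i α x hx.2, ENNReal.ofReal_mul (by positivity)]
  rw [e2] at key
  simp only [finrank_euclideanSpace, Fintype.card_fin, smul_eq_mul] at key
  rw [abs_of_nonneg (by positivity)] at key
  have hc : ENNReal.ofReal ((2:ℝ)^d)⁻¹ ≠ 0 := by
    simp only [ne_eq, ENNReal.ofReal_eq_zero, not_le]; positivity
  have key2 := (ENNReal.mul_right_inj hc ENNReal.ofReal_ne_top).1 key
  have hsub : halfBall d i (1/8) ⊆ halfBall d i (1/4) := fun x hx => ⟨by linarith [hx.1], hx.2⟩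
  have hsplit := lintegral_inter_add_sdiff (μ := volume)
    (fun y => ENNReal.ofReal (gfun d i α y)) (halfBall d i (1/4)) hA'
  rw [inter_eq_self_of_subset_right hsub, ← key2] at hsplit
  have hz : ∫⁻ y in halfBall d i (1/4) \ halfBall d i (1/8), ENNReal.ofReal (gfun d i α y) = 0 := by
    exact (ENNReal.add_right_inj hne).1 (by rw [hsplit, add_zero])
  have hpos : 0 < ∫⁻ y in halfBall d i (1/4) \ halfBall d i (1/8),
      ENNReal.ofReal (gfun d i α y) := by
    rw [setLIntegral_pos_iff hm]
    have hO : IsOpen (halfBall d i (1/4) ∩ {y | 1/8 < ‖y‖}) :=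
      (halfBall_open d i (1/4)).inter (isOpen_lt (by fun_prop) (by fun_prop))
    refine lt_of_lt_of_le (hO.measure_pos volume ?_) (measure_mono ?_)
    · refine ⟨EuclideanSpace.single i (3/16:ℝ), ?_⟩
      simp only [halfBall, mem_inter_iff, mem_ofPred_eq, EuclideanSpace.norm_single]
      norm_num
    · rintro y ⟨hy, hy2⟩
      refine ⟨?_, hy, fun h => ?_⟩
      · have := gfun_pos d i α hd hα y hy.2
        simpa using this
      · exact absurd h.1 (not_lt.2 (le_of_lt hy2))
  exact hpos.ne' hz

lemma ffun_nonneg (d : ℕ) (i : Fin d) (α h : ℝ) (hd : 1 ≤ d) (hα : α < 1) (hh : 0 < h)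
    (y : EuclideanSpace ℝ (Fin d)) (hy : 0 < y i) : 0 ≤ ffun d i α h y := by
  have h1 := norm_pos_of d i y hy
  have h2 : (1:ℝ) ≤ d := by exact_mod_cast hd
  refine mul_nonneg (sub_nonneg.2 ?_) (by positivity)
  refine Real.rpow_le_rpow_of_nonpos h1 ?_ (by linarith)
  refine le_of_sq_le_sq ?_ (norm_nonneg _)
  rw [norm_sq_shift]
  have : 0 < h * y i := by positivity
  nlinarith

lemma ffun_le (d : ℕ) (i : Fin d) (α h : ℝ) (hα : α < 1)
    (y : EuclideanSpace ℝ (Fin d)) (hy : y ∈ halfBall d i (1/4)) :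
    ffun d i α h y ≤ ‖y‖ ^ (α - (d:ℝ)) := by
  have h1 : y i ≤ ‖y‖ := (le_abs_self _).trans (PiLp.norm_apply_le y i)
  have h2 : y i ^ (1 - α) ≤ 1 := Real.rpow_le_one hy.2.le (by linarith [hy.1]) (by linarith)
  have h3 : 0 ≤ y i ^ (1 - α) := Real.rpow_nonneg hy.2.le _
  have h4 : 0 ≤ ‖y‖ ^ (α - (d:ℝ)) := by positivity
  have h5 : 0 ≤ ‖y + h • EuclideanSpace.single i (1:ℝ)‖ ^ (α - (d:ℝ)) := by positivity
  unfold ffun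
  nlinarith [mul_nonneg h5 h3, mul_nonneg h4 (sub_nonneg.2 h2)]

lemma ffun_int (d : ℕ) (i : Fin d) (α h : ℝ) (hd : 1 ≤ d) (hα0 : 0 < α) (hα : α < 1) (hh : 0 < h) :
    IntegrableOn (ffun d i α h) (halfBall d i (1/4)) := by
  have hb : IntegrableOn (fun y : EuclideanSpace ℝ (Fin d) => ‖y‖ ^ (α - (d:ℝ)))
      (Metric.ball 0 (1/4)) := by
    refine integrableOn_ball_of_norm_le_rpow (C := 1) (α := d - α) (by simpa using hd) (by simpa using hα0)
      ?_ (measurable_norm.pow_const _).aestronglyMeasurable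
    refine ae_of_all _ fun y => ?_
    rw [Real.norm_of_nonneg (by positivity)]
    simp
  have hb2 := hb.mono_set (s := halfBall d i (1/4)) fun y hy => by simpa using hy.1
  refine Integrable.mono' hb2 (ffun_meas d i α h).aestronglyMeasurable ?_
  refine ae_restrict_of_forall_mem (halfBall_open d i (1/4)).measurableSet fun y hy => ?_
  rw [Real.norm_of_nonneg (ffun_nonneg d i α h hd hα hh y hy.2)]
  exact ffun_le d i α h hα y hy

lemma ffun_lim (d : ℕ) (i : Fin d) (α : ℝ)
    (y : EuclideanSpace ℝ (Fin d)) (hy : 0 < y i) :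
    Tendsto (fun h => (1 / h) * ffun d i α h y) (𝓝[>] 0) (𝓝 (gfun d i α y)) := by
  have h1 := norm_pos_of d i y hy
  have e : ∀ h : ℝ, ‖y + h • EuclideanSpace.single i (1:ℝ)‖ ^ (α - (d:ℝ))
      = (‖y‖ ^ 2 + 2 * h * y i + h ^ 2) ^ ((α - (d:ℝ)) / 2) := fun h => by
    rw [← norm_sq_shift, ← Real.rpow_natCast, ← Real.rpow_mul (norm_nonneg _)]
    congr 1; push_cast; ring
  have hd0 : HasDerivAt (fun h : ℝ => ‖y‖ ^ 2 + 2 * h * y i + h ^ 2) (2 * y i) 0 := by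
    have a := ((((hasDerivAt_id (0:ℝ)).const_mul 2).mul_const (y i)).const_add (‖y‖^2)).add
      (hasDerivAt_pow 2 (0:ℝ))
    refine HasDerivAt.congr_deriv (f' := 2 * 1 * y i + ((2:ℕ):ℝ) * 0 ^ (2 - 1)) a ?_
    simp
  have hd1 := hd0.rpow_const (p := (α - (d:ℝ)) / 2) (Or.inl (by simp [h1.ne']))
  have hs := hd1.tendsto_slope.mono_left (nhdsWithin_mono (0:ℝ) (fun x (hx : 0 < x) => hx.ne'))
  have hs2 := (hs.neg).mul_const (y i ^ (1 - α))
  have hlim : -(2 * y i * ((α - (d:ℝ)) / 2) *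
      (‖y‖ ^ 2 + 2 * 0 * y i + 0 ^ 2) ^ ((α - (d:ℝ)) / 2 - 1)) * y i ^ (1 - α) = gfun d i α y := by
    have e1 : (‖y‖ ^ 2 + 2 * 0 * y i + 0 ^ 2) ^ ((α - (d:ℝ)) / 2 - 1)
        = ‖y‖ ^ (α - (d:ℝ) - 2) := by
      rw [show ‖y‖ ^ 2 + 2 * 0 * y i + 0 ^ 2 = ‖y‖ ^ 2 by ring, ← Real.rpow_natCast,
        ← Real.rpow_mul (norm_nonneg _)]
      congr 1; push_cast; ring
    have e2 : y i ^ (2 - α) = y i * y i ^ (1 - α) := by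
      rw [show 2 - α = 1 + (1 - α) by ring, Real.rpow_add hy, Real.rpow_one]
    rw [e1, gfun, e2]; ring
  rw [hlim] at hs2
  refine hs2.congr fun h => ?_
  have e0 := e 0
  simp only [zero_smul, add_zero] at e0
  rw [slope_def_field, ffun, e h, e0]
  ring

lemma main_top (d : ℕ) (i : Fin d) (α : ℝ) (hd : 1 ≤ d) (hα0 : 0 < α) (hα : α < 1) :
    Tendsto (fun h : ℝ => (1 / h) * ∫ y in halfBall d i (1/4), ffun d i α h y) (𝓝[>] 0) atTop := by
  have hA := (halfBall_open d i (1/4)).measurableSet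
  refine tendsto_of_seq_tendsto fun u hu => ?_
  have hu0 : ∀ᶠ n in atTop, 0 < u n := hu.eventually self_mem_nhdsWithin
  rw [← ENNReal.tendsto_ofReal_nhds_top]
  have hEq : ∀ᶠ n in atTop, ∫⁻ y in halfBall d i (1/4), ENNReal.ofReal ((1 / u n) * ffun d i α (u n) y)
     = ENNReal.ofReal ((1 / u n) * ∫ y in halfBall d i (1/4), ffun d i α (u n) y) := by
    filter_upwards [hu0] with n hn
    rw [← integral_const_mul, ofReal_integral_eq_lintegral_ofReal]
    · exact (ffun_int d i α (u n) hd hα0 hα hn).const_mul _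
    · refine ae_restrict_of_forall_mem hA fun y hy => ?_
      exact mul_nonneg (by positivity) (ffun_nonneg d i α (u n) hd hα hn y hy.2)
  refine Tendsto.congr' hEq ?_
  refine tendsto_of_le_liminf_of_limsup_le ?_ le_top
  have hF := lintegral_liminf_le (μ := volume.restrict (halfBall d i (1/4)))
    (u := atTop) (f := fun (n : ℕ) y => ENNReal.ofReal ((1 / u n) * ffun d i α (u n) y))
    (fun n => ((ffun_meas d i α (u n)).const_mul _).ennreal_ofReal)
  refine le_trans (le_of_eq ?_) hF
  rw [← lintegral_g_top d i α hd hα]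
  refine setLIntegral_congr_fun hA fun y hy => ?_
  exact (Tendsto.liminf_eq (ENNReal.tendsto_ofReal ((ffun_lim d i α y hy.2).comp hu))).symm

theorem stmt_6 (d : ℕ) (hd : 1 ≤ d) (α : ℝ) (hα : α ∈ Ioo (0:ℝ) 1) :
    Tendsto (fun h : ℝ =>
        (1 / h) * ∫ y in {y : EuclideanSpace ℝ (Fin d) | ‖y‖ < 1/4 ∧ 0 < y ⟨d - 1, by omega⟩},
          (‖y‖ ^ (α - (d:ℝ))
            - ‖y + h • EuclideanSpace.single (⟨d - 1, by omega⟩ : Fin d) (1:ℝ)‖ ^ (α - (d:ℝ)))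
            * (y ⟨d - 1, by omega⟩) ^ (1 - α))
      (𝓝[>] 0) atTop :=
  main_top d ⟨d - 1, by omega⟩ α hd hα.1 hα.2
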